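/- If μ > 0 and ‖x̃₀ − x*‖₂ ≤ R, then for every N ≥ 0 the STM iterates with μ_τ = μ/2 (τ = 2) satisfy f(x_N) − f(x*) ≤ L R² exp(−(N/2)√(μ/(2L))) + (1 + √(2L/μ))(δ₂ + δ₃), where δ₂ = δ²/(2L_f), δ₃ = δ²/μ, and L = 2L_f. -/

import Mathlib

open scoped RealInnerProductSpace

/-!
The similar triangles method is analysed for an inexact oracle `g`: at every `v ∈ Q` the quadratic
model of curvature `m` minorizes `f` up to `ε₁`, and the one of curvature `L` majorizes it up to
`ε₂`. For a strongly convex smooth `f` and a `δ`-accurate gradient, Young's inequality provides such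
an oracle, at the price of halving `μ` and doubling `L_f`.

The estimating functions `ψ k` are `(1 + m * A k)`-strongly convex, so they grow quadratically away
from their minimizers `z k`. As `x (k + 1) - xt (k + 1)` is proportional to `z (k + 1) - z k`, the
equation for `α (k + 1)` says exactly that this growth pays for the upper model at `x (k + 1)`.
Hence `A k * f (x k) ≤ ψ k (z k)` up to an error of order `∑ j ≤ k, A j`. Comparing with `ψ k u`
and dividing by `A k`, which grows like `(1 + √(m / L)) ^ k`, gives the rate.
-/

section OrderedField

variable {𝕜 : Type*} [Field 𝕜] [LinearOrder 𝕜] [IsStrictOrderedRing 𝕜]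

theorem inv_add_smul_add_mem_of_convex {E : Type*} [AddCommGroup E] [Module 𝕜 E] {Q : Set E}
    (hQ : Convex 𝕜 Q) {a b : 𝕜} (ha : 0 ≤ a) (hb : 0 < b) {u v : E} (hu : u ∈ Q) (hv : v ∈ Q) :
    (a + b)⁻¹ • (a • u + b • v) ∈ Q := by
  rw [smul_add, smul_smul, smul_smul]
  exact hQ hu hv (by positivity) (by positivity) (by field_simp)

theorem sum_range_succ_le_of_geometric_growth {a : ℕ → 𝕜} {q : 𝕜} (hq : 0 < q) (h0 : 0 ≤ a 0)
    (ha : ∀ k, (1 + q) * a k ≤ a (k + 1)) (k : ℕ) :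
    ∑ j ∈ Finset.range (k + 1), a j ≤ (1 + q⁻¹) * a k := by
  induction k with
  | zero =>
    rw [zero_add, Finset.sum_range_one]
    linarith [mul_nonneg (inv_pos.2 hq).le h0]
  | succ k ih =>
    calc ∑ j ∈ Finset.range (k + 2), a j
        ≤ (1 + q⁻¹) * a k + a (k + 1) := by rw [Finset.sum_range_succ]; gcongr
      _ = q⁻¹ * ((1 + q) * a k) + a (k + 1) := by field_simp; ring
      _ ≤ q⁻¹ * a (k + 1) + a (k + 1) := by gcongr; exact ha k
      _ = (1 + q⁻¹) * a (k + 1) := by ring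

end OrderedField

section UniformConvexity

variable {E : Type*} [NormedAddCommGroup E] [NormedSpace ℝ E]

theorem add_norm_sub_le_of_uniformConvexOn_of_isMinOn {Q : Set E} {φ : ℝ → ℝ} {h : E → ℝ}
    {y z : E} (hh : UniformConvexOn Q φ h) (hy : y ∈ Q) (hz : z ∈ Q) (hmin : IsMinOn h Q z) :
    h z + φ ‖y - z‖ ≤ h y := by
  have hsegment : ∀ t ∈ Set.Ioo (0 : ℝ) 1, h z + (1 - t) * φ ‖y - z‖ ≤ h y := by
    intro t ht
    have ht' : 0 ≤ 1 - t := by linarith [ht.2]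
    have hmin' := isMinOn_iff.1 hmin _ (hh.1 hy hz ht.1.le ht' (by ring))
    have hconv := hh.2 hy hz ht.1.le ht' (by ring)
    simp only [smul_eq_mul] at hconv
    refine le_of_mul_le_mul_left ?_ ht.1
    linarith
  have hlim : Filter.Tendsto (fun t : ℝ => h z + (1 - t) * φ ‖y - z‖)
      (nhdsWithin 0 (Set.Ioi 0)) (nhds (h z + (1 - 0) * φ ‖y - z‖)) :=
    (Continuous.tendsto (by fun_prop) 0).mono_left nhdsWithin_le_nhds
  simpa using
    le_of_tendsto hlim (Filter.eventually_of_mem (Ioo_mem_nhdsGT zero_lt_one) hsegment)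

end UniformConvexity

theorem exp_half_le_one_add {q : ℝ} (hq0 : 0 ≤ q) (hq1 : q ≤ 1) : Real.exp (q / 2) ≤ 1 + q := by
  refine (Real.exp_bound_div_one_sub_of_interval (by linarith) (by linarith)).trans ?_
  rw [div_le_iff₀ (by linarith)]
  nlinarith

theorem inv_one_add_pow_le_exp {q : ℝ} (hq0 : 0 ≤ q) (hq1 : q ≤ 1) (n : ℕ) :
    ((1 + q) ^ n)⁻¹ ≤ Real.exp (-((n : ℝ) / 2) * q) := by
  rw [show -((n : ℝ) / 2) * q = -(n * (q / 2)) by ring, Real.exp_neg, Real.exp_nat_mul]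
  gcongr
  exact exp_half_le_one_add hq0 hq1

section QuadraticModel

variable {E : Type*} [NormedAddCommGroup E] [InnerProductSpace ℝ E]

theorem real_inner_le_sq_div_add_mul_sq {c δ : ℝ} {u w : E} (hc : 0 < c) (hu : ‖u‖ ≤ δ) :
    ⟪u, w⟫ ≤ δ ^ 2 / (2 * c) + c / 2 * ‖w‖ ^ 2 := by
  have hsq : δ ^ 2 / (2 * c) + c / 2 * ‖w‖ ^ 2 - δ * ‖w‖ = (δ - c * ‖w‖) ^ 2 / (2 * c) := by
    field_simp
    ring
  have hsq_nonneg : 0 ≤ (δ - c * ‖w‖) ^ 2 / (2 * c) := by positivity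
  have hinner : ⟪u, w⟫ ≤ δ * ‖w‖ := (real_inner_le_norm u w).trans (by gcongr)
  linarith

/-- The quadratic model of `f` at `v` with slope `g v` and curvature `m`, evaluated at `y`. The
vector field `g` stands for an exact or approximate gradient of `f`. -/
noncomputable def quadraticModel (f : E → ℝ) (g : E → E) (m : ℝ) (v y : E) : ℝ :=
  f v + ⟪g v, y - v⟫ + m / 2 * ‖y - v‖ ^ 2

variable {f : E → ℝ} {g : E → E}

@[simp]
theorem quadraticModel_self (m : ℝ) (v : E) : quadraticModel f g m v v = f v := by
  simp [quadraticModel]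

theorem strongConvexOn_add_mul_quadraticModel {Q : Set E} {h : E → ℝ} {s : ℝ}
    (hh : StrongConvexOn Q s h) (a m : ℝ) (v : E) :
    StrongConvexOn Q (s + m * a) fun y => h y + a * quadraticModel f g m v y := by
  rw [strongConvexOn_iff_convex] at hh ⊢
  have haffine := ((innerₛₗ ℝ (a • g v - (a * m) • v)).convexOn hh.1).add_const
    (a * (f v - ⟪g v, v⟫ + m / 2 * ‖v‖ ^ 2))
  refine (hh.add haffine).congr fun y _ => ?_
  simp only [quadraticModel, Pi.add_apply, innerₛₗ_apply_apply, inner_sub_left, inner_sub_right,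
    real_inner_smul_left, norm_sub_sq_real, real_inner_comm y v]
  ring

/-- The points `v` and `x'` split their segments in the same ratio, so `x' - v` and
`z' - z` are parallel (the similar triangles). -/
theorem add_mul_quadraticModel_le {a b L m : ℝ} {x z z' v x' : E} (ha : 0 ≤ a) (hb : 0 < b)
    (hm : 0 ≤ m) (hab : (1 + m * a) * (a + b) = L * b ^ 2)
    (hv : (a + b) • v = a • x + b • z) (hx' : (a + b) • x' = a • x + b • z') :
    (a + b) * quadraticModel f g L v x' ≤ a * quadraticModel f g m v x +
      b * quadraticModel f g m v z' + (1 + m * a) / 2 * ‖z' - z‖ ^ 2 := by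
  have hpos : 0 < a + b := by linarith
  have hparallel : (a + b) • (x' - v) = b • (z' - z) := by
    rw [smul_sub, hv, hx', add_sub_add_left_eq_sub, smul_sub]
  have hcomb : (a + b) • (x' - v) = a • (x - v) + b • (z' - v) := by
    rw [smul_sub, hx']
    module
  have hnorm : (a + b) ^ 2 * ‖x' - v‖ ^ 2 = b ^ 2 * ‖z' - z‖ ^ 2 := by
    have := congrArg (fun w => ‖w‖ ^ 2) hparallel
    simpa only [norm_smul, mul_pow, Real.norm_eq_abs, sq_abs] using this
  have hinner : (a + b) * ⟪g v, x' - v⟫ = a * ⟪g v, x - v⟫ + b * ⟪g v, z' - v⟫ := by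
    have := congrArg (fun w => ⟪g v, w⟫) hcomb
    simpa only [inner_add_right, inner_smul_right] using this
  have hquad : (a + b) * (L * ‖x' - v‖ ^ 2) = (1 + m * a) * ‖z' - z‖ ^ 2 := by
    apply mul_left_cancel₀ hpos.ne'
    linear_combination L * hnorm - ‖z' - z‖ ^ 2 * hab
  have hx_nonneg : 0 ≤ a * (m / 2 * ‖x - v‖ ^ 2) := by positivity
  have hz_nonneg : 0 ≤ b * (m / 2 * ‖z' - v‖ ^ 2) := by positivity
  simp only [quadraticModel]
  linarith

end QuadraticModel

section InexactOracle

variable {E : Type*} [NormedAddCommGroup E] [InnerProductSpace ℝ E]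

/-- An inexact first-order oracle for `f` on `Q`: the models of `f` with slopes `g` and curvatures
`m` and `L` bound `f` from below and above, up to the errors `ε₁` and `ε₂` respectively. -/
structure IsInexactOracleOn (Q : Set E) (f : E → ℝ) (g : E → E) (L m ε₁ ε₂ : ℝ) : Prop where
  lower : ∀ v ∈ Q, ∀ w ∈ Q, quadraticModel f g m v w ≤ f w + ε₁
  upper : ∀ v ∈ Q, ∀ w ∈ Q, f w ≤ quadraticModel f g L v w + ε₂

variable {Q : Set E} {f : E → ℝ} {f' g : E → E} {L m ε₁ ε₂ K μ δ : ℝ}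

theorem IsInexactOracleOn.error_add_nonneg (h : IsInexactOracleOn Q f g L m ε₁ ε₂)
    (hQ : Q.Nonempty) : 0 ≤ ε₁ + ε₂ := by
  obtain ⟨v, hv⟩ := hQ
  have hlower := h.lower v hv v hv
  have hupper := h.upper v hv v hv
  rw [quadraticModel_self] at hlower hupper
  linarith

theorem IsInexactOracleOn.curvature_le (h : IsInexactOracleOn Q f g L m 0 0)
    (hQ : Q.Nontrivial) : m ≤ L := by
  obtain ⟨v, hv, w, hw, hne⟩ := hQ
  have hpos : 0 < ‖w - v‖ ^ 2 := by
    have := norm_pos_iff.2 (sub_ne_zero.2 hne.symm)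
    positivity
  have hlower := h.lower v hv w hw
  have hupper := h.upper v hv w hw
  simp only [quadraticModel] at hlower hupper
  exact le_of_mul_le_mul_right (by linarith) hpos

theorem IsInexactOracleOn.of_norm_sub_le (h : IsInexactOracleOn Q f f' K μ 0 0) (hK : 0 < K)
    (hμ : 0 < μ) (hg : ∀ v ∈ Q, ‖g v - f' v‖ ≤ δ) :
    IsInexactOracleOn Q f g (2 * K) (μ / 2) (δ ^ 2 / μ) (δ ^ 2 / (2 * K)) where
  lower v hv w hw := by
    have hyoung := real_inner_le_sq_div_add_mul_sq (w := w - v) (half_pos hμ) (hg v hv)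
    have hmodel := h.lower v hv w hw
    rw [inner_sub_left, mul_div_cancel₀ μ two_ne_zero] at hyoung
    simp only [quadraticModel] at hmodel ⊢
    linarith
  upper v hv w hw := by
    have hyoung := real_inner_le_sq_div_add_mul_sq (w := w - v) hK
      ((norm_sub_rev (f' v) (g v)).trans_le (hg v hv))
    have hmodel := h.upper v hv w hw
    rw [inner_sub_left] at hyoung
    simp only [quadraticModel] at hmodel ⊢
    linarith

section Gradient

open AffineMap

variable [CompleteSpace E]

theorem hasDerivAt_comp_lineMap_of_hasGradientAt {p v w : E} {t : ℝ}
    (hf : HasGradientAt f p (lineMap v w t)) :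
    HasDerivAt (fun t : ℝ => f (lineMap v w t)) ⟪p, w - v⟫ t := by
  simpa [Function.comp_def] using hf.hasFDerivAt.comp_hasDerivAt t hasDerivAt_lineMap

theorem le_quadraticModel_of_lipschitz_gradient (hQ : Convex ℝ Q)
    (hgrad : ∀ v ∈ Q, HasGradientAt f (f' v) v)
    (hlip : ∀ v ∈ Q, ∀ w ∈ Q, ‖f' v - f' w‖ ≤ K * ‖v - w‖) {v w : E} (hv : v ∈ Q) (hw : w ∈ Q) :
    f w ≤ quadraticModel f f' K v w := by
  have hmem : ∀ t ∈ Set.Icc (0 : ℝ) 1, lineMap v w t ∈ Q := fun t ht => hQ.lineMap_mem hv hw ht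
  have hf : ∀ t ∈ Set.Icc (0 : ℝ) 1, HasDerivAt (fun t : ℝ => f (lineMap v w t))
      ⟪f' (lineMap v w t), w - v⟫ t := fun t ht =>
    hasDerivAt_comp_lineMap_of_hasGradientAt (hgrad _ (hmem t ht))
  have hmodel : ∀ t : ℝ, HasDerivAt
      (fun t : ℝ => f v + t * ⟪f' v, w - v⟫ + K / 2 * ‖w - v‖ ^ 2 * t ^ 2)
      (⟪f' v, w - v⟫ + K * ‖w - v‖ ^ 2 * t) t := by
    intro t
    refine ((((hasDerivAt_id t).mul_const ⟪f' v, w - v⟫).const_add (f v)).add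
      ((hasDerivAt_pow 2 t).const_mul (K / 2 * ‖w - v‖ ^ 2))).congr_deriv ?_
    push_cast
    ring
  have hderiv_le : ∀ t ∈ Set.Icc (0 : ℝ) 1,
      ⟪f' (lineMap v w t), w - v⟫ ≤ ⟪f' v, w - v⟫ + K * ‖w - v‖ ^ 2 * t := by
    intro t ht
    rw [← sub_le_iff_le_add', ← inner_sub_left]
    calc ⟪f' (lineMap v w t) - f' v, w - v⟫
        ≤ ‖f' (lineMap v w t) - f' v‖ * ‖w - v‖ := real_inner_le_norm _ _
      _ ≤ K * ‖lineMap v w t - v‖ * ‖w - v‖ := by gcongr; exact hlip _ (hmem t ht) v hv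
      _ = K * ‖w - v‖ ^ 2 * t := by
        rw [← dist_eq_norm, dist_lineMap_left, Real.norm_of_nonneg ht.1, dist_eq_norm_sub']
        ring
  have hle := image_le_of_deriv_right_le_deriv_boundary
    (fun t ht => (hf t ht).continuousAt.continuousWithinAt)
    (fun t ht => (hf t (Set.Ico_subset_Icc_self ht)).hasDerivWithinAt) (by simp)
    (fun t _ => (hmodel t).continuousAt.continuousWithinAt)
    (fun t _ => (hmodel t).hasDerivWithinAt)
    (fun t ht => hderiv_le t (Set.Ico_subset_Icc_self ht)) (Set.right_mem_Icc.2 zero_le_one)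
  simpa [quadraticModel] using hle

theorem isInexactOracleOn_gradient (hQ : Convex ℝ Q) (hgrad : ∀ v ∈ Q, HasGradientAt f (f' v) v)
    (hlip : ∀ v ∈ Q, ∀ w ∈ Q, ‖f' v - f' w‖ ≤ K * ‖v - w‖)
    (hsc : ∀ v ∈ Q, ∀ w ∈ Q, f v + ⟪f' v, w - v⟫ + μ / 2 * ‖v - w‖ ^ 2 ≤ f w) :
    IsInexactOracleOn Q f f' K μ 0 0 where
  lower v hv w hw := by
    rw [quadraticModel, norm_sub_rev w v, add_zero]
    exact hsc v hv w hw
  upper v hv w hw := by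
    rw [add_zero]
    exact le_quadraticModel_of_lipschitz_gradient hQ hgrad hlip hv hw

end Gradient

end InexactOracle

section SimilarTriangles

variable {E : Type*} [NormedAddCommGroup E] [InnerProductSpace ℝ E]

/-- The sequences produced by the similar triangles method on `Q`, run with the inexact gradient
`g`, the smoothness constant `L` and the strong convexity constant `m`. Here `xt` is the paper's
`x̃`, and `z k` is any minimizer of the estimating function `ψ k` over `Q`. -/
structure IsSimilarTrianglesMethod (Q : Set E) (f : E → ℝ) (g : E → E) (L m : ℝ) (α A : ℕ → ℝ)
    (xt x z : ℕ → E) (ψ : ℕ → E → ℝ) : Prop where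
  xt_zero_mem : xt 0 ∈ Q
  α_zero : α 0 = 1 / L
  A_zero : A 0 = 1 / L
  ψ_zero : ∀ y, ψ 0 y = 1 / 2 * ‖y - xt 0‖ ^ 2 + α 0 * quadraticModel f g m (xt 0) y
  z_mem : ∀ k, z k ∈ Q
  isMinOn_z : ∀ k, IsMinOn (ψ k) Q (z k)
  x_zero : x 0 = z 0
  α_succ_pos : ∀ k, 0 < α (k + 1)
  α_succ_eq : ∀ k, (1 + m * A k) * (A k + α (k + 1)) = L * α (k + 1) ^ 2
  A_succ : ∀ k, A (k + 1) = A k + α (k + 1)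
  xt_succ : ∀ k, xt (k + 1) = (A (k + 1))⁻¹ • (A k • x k + α (k + 1) • z k)
  ψ_succ : ∀ k y, ψ (k + 1) y = ψ k y + α (k + 1) * quadraticModel f g m (xt (k + 1)) y
  x_succ : ∀ k, x (k + 1) = (A (k + 1))⁻¹ • (A k • x k + α (k + 1) • z (k + 1))

namespace IsSimilarTrianglesMethod

variable {Q : Set E} {f : E → ℝ} {g : E → E} {L m ε₁ ε₂ : ℝ} {α A : ℕ → ℝ} {xt x z : ℕ → E}
  {ψ : ℕ → E → ℝ} (h : IsSimilarTrianglesMethod Q f g L m α A xt x z ψ)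

include h

theorem A_pos (hL : 0 < L) (k : ℕ) : 0 < A k := by
  induction k with
  | zero => rw [h.A_zero]; positivity
  | succ k ih => rw [h.A_succ]; exact add_pos ih (h.α_succ_pos k)

theorem x_mem (hQ : Convex ℝ Q) (hL : 0 < L) (k : ℕ) : x k ∈ Q := by
  induction k with
  | zero => rw [h.x_zero]; exact h.z_mem 0
  | succ k ih =>
    rw [h.x_succ, h.A_succ]
    exact inv_add_smul_add_mem_of_convex hQ (h.A_pos hL k).le (h.α_succ_pos k) ih (h.z_mem _)

theorem xt_mem (hQ : Convex ℝ Q) (hL : 0 < L) (k : ℕ) : xt k ∈ Q := by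
  cases k with
  | zero => exact h.xt_zero_mem
  | succ k =>
    rw [h.xt_succ, h.A_succ]
    exact inv_add_smul_add_mem_of_convex hQ (h.A_pos hL k).le (h.α_succ_pos k)
      (h.x_mem hQ hL k) (h.z_mem k)

theorem strongConvexOn_ψ (hQ : Convex ℝ Q) (k : ℕ) : StrongConvexOn Q (1 + m * A k) (ψ k) := by
  induction k with
  | zero =>
    have hsq := strongConvexOn_add_mul_quadraticModel (f := 0) (g := 0)
      (strongConvexOn_zero.2 (convexOn_const 0 hQ)) 1 1 (xt 0)
    convert strongConvexOn_add_mul_quadraticModel (f := f) (g := g) hsq (α 0) m (xt 0) using 1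
    · rw [h.A_zero, h.α_zero]
      ring
    · funext y
      simp [h.ψ_zero, quadraticModel]
  | succ k ih =>
    convert strongConvexOn_add_mul_quadraticModel (f := f) (g := g) ih (α (k + 1)) m (xt (k + 1))
      using 1
    · rw [h.A_succ]
      ring
    · funext y
      rw [h.ψ_succ]

theorem A_succ_mul_quadraticModel_le (hL : 0 < L) (hm : 0 ≤ m) (k : ℕ) :
    A (k + 1) * quadraticModel f g L (xt (k + 1)) (x (k + 1)) ≤
      A k * quadraticModel f g m (xt (k + 1)) (x k) +
        α (k + 1) * quadraticModel f g m (xt (k + 1)) (z (k + 1)) +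
          (1 + m * A k) / 2 * ‖z (k + 1) - z k‖ ^ 2 := by
  have hA := (h.A_pos hL (k + 1)).ne'
  have hxt := h.xt_succ k
  have hx := h.x_succ k
  rw [eq_inv_smul_iff₀ hA, h.A_succ] at hxt hx
  rw [h.A_succ]
  exact add_mul_quadraticModel_le (h.A_pos hL k).le (h.α_succ_pos k) hm (h.α_succ_eq k) hxt hx

theorem A_mul_le_ψ_add (hQ : Convex ℝ Q) (hL : 0 < L) (hm : 0 ≤ m)
    (horacle : IsInexactOracleOn Q f g L m ε₁ ε₂) (k : ℕ) :
    A k * (f (x k) + ε₁) ≤ ψ k (z k) + (ε₁ + ε₂) * ∑ j ∈ Finset.range (k + 1), A j := by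
  have hApos := h.A_pos hL
  induction k with
  | zero =>
    have hupper := mul_le_mul_of_nonneg_left
      (horacle.upper _ h.xt_zero_mem _ (h.z_mem 0)) (hApos 0).le
    have hAL : A 0 * (L / 2 * ‖z 0 - xt 0‖ ^ 2) = 1 / 2 * ‖z 0 - xt 0‖ ^ 2 := by
      rw [h.A_zero]
      field_simp
    have hnonneg : 0 ≤ A 0 * (m / 2 * ‖z 0 - xt 0‖ ^ 2) :=
      mul_nonneg (hApos 0).le (by positivity)
    rw [h.ψ_zero, h.x_zero, h.α_zero, ← h.A_zero, zero_add, Finset.sum_range_one]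
    simp only [quadraticModel] at hupper ⊢
    linarith
  | succ k ih =>
    have hupper := mul_le_mul_of_nonneg_left
      (horacle.upper _ (h.xt_mem hQ hL (k + 1)) _ (h.x_mem hQ hL (k + 1))) (hApos (k + 1)).le
    have hlower := mul_le_mul_of_nonneg_left
      (horacle.lower _ (h.xt_mem hQ hL (k + 1)) _ (h.x_mem hQ hL k)) (hApos k).le
    have hcoupling := h.A_succ_mul_quadraticModel_le hL hm k
    have hgrowth := add_norm_sub_le_of_uniformConvexOn_of_isMinOn (h.strongConvexOn_ψ hQ k)
      (h.z_mem (k + 1)) (h.z_mem k) (h.isMinOn_z k)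
    rw [h.ψ_succ, Finset.sum_range_succ]
    linarith

theorem ψ_le (hQ : Convex ℝ Q) (hL : 0 < L) (horacle : IsInexactOracleOn Q f g L m ε₁ ε₂)
    {u : E} (hu : u ∈ Q) (k : ℕ) :
    ψ k u ≤ 1 / 2 * ‖xt 0 - u‖ ^ 2 + A k * (f u + ε₁) := by
  have hlower := fun k => horacle.lower _ (h.xt_mem hQ hL k) u hu
  induction k with
  | zero =>
    rw [h.ψ_zero, h.α_zero, ← h.A_zero, norm_sub_rev]
    have hApos := h.A_pos hL 0
    gcongr
    exact hlower 0
  | succ k ih =>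
    have hstep := mul_le_mul_of_nonneg_left (hlower (k + 1)) (h.α_succ_pos k).le
    rw [h.ψ_succ, h.A_succ]
    linarith

theorem one_add_sqrt_mul_A_le (hL : 0 < L) (hm : 0 ≤ m) (k : ℕ) :
    (1 + √(m / L)) * A k ≤ A (k + 1) := by
  have hA := h.A_pos hL k
  have hα := h.α_succ_pos k
  have hle : √(m / L) * A k ≤ α (k + 1) := by
    refine le_of_sq_le_sq ?_ hα.le
    refine le_of_mul_le_mul_left ?_ hL
    calc L * (√(m / L) * A k) ^ 2 = m * A k * A k := by
          rw [mul_pow, Real.sq_sqrt (by positivity)]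
          field_simp
      _ ≤ (1 + m * A k) * (A k + α (k + 1)) := by gcongr <;> linarith
      _ = L * α (k + 1) ^ 2 := h.α_succ_eq k
  rw [h.A_succ]
  linarith

theorem one_add_sqrt_pow_le (hL : 0 < L) (hm : 0 ≤ m) (k : ℕ) :
    (1 + √(m / L)) ^ k ≤ L * A k := by
  have hgeom := geom_le (by positivity) k fun j _ => h.one_add_sqrt_mul_A_le hL hm j
  rwa [h.A_zero, mul_one_div, div_le_iff₀' hL] at hgeom

theorem sum_A_le (hL : 0 < L) (hm : 0 < m) (k : ℕ) :
    ∑ j ∈ Finset.range (k + 1), A j ≤ (1 + √(L / m)) * A k := by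
  rw [← inv_div m L, Real.sqrt_inv]
  exact sum_range_succ_le_of_geometric_growth (by positivity) (h.A_pos hL 0).le
    (h.one_add_sqrt_mul_A_le hL hm.le) k

theorem sub_le (hQ : Convex ℝ Q) (hL : 0 < L) (hm : 0 < m)
    (horacle : IsInexactOracleOn Q f g L m ε₁ ε₂) {u : E} (hu : u ∈ Q) (N : ℕ) :
    f (x N) - f u ≤
      L / 2 * ‖xt 0 - u‖ ^ 2 * ((1 + √(m / L)) ^ N)⁻¹ + (1 + √(L / m)) * (ε₁ + ε₂) := by
  have hA := h.A_pos hL N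
  have herror := mul_le_mul_of_nonneg_left (h.sum_A_le hL hm N)
    (horacle.error_add_nonneg ⟨u, hu⟩)
  have hgap : A N * (f (x N) - f u - (1 + √(L / m)) * (ε₁ + ε₂)) ≤ 1 / 2 * ‖xt 0 - u‖ ^ 2 := by
    linarith [h.A_mul_le_ψ_add hQ hL hm.le horacle N, isMinOn_iff.1 (h.isMinOn_z N) u hu,
      h.ψ_le hQ hL horacle hu N]
  rw [← sub_le_iff_le_add]
  calc f (x N) - f u - (1 + √(L / m)) * (ε₁ + ε₂)
      ≤ 1 / 2 * ‖xt 0 - u‖ ^ 2 / A N := (le_div_iff₀' hA).2 hgap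
    _ = L / 2 * ‖xt 0 - u‖ ^ 2 * (L * A N)⁻¹ := by field_simp
    _ ≤ L / 2 * ‖xt 0 - u‖ ^ 2 * ((1 + √(m / L)) ^ N)⁻¹ := by
      gcongr
      exact h.one_add_sqrt_pow_le hL hm.le N

end IsSimilarTrianglesMethod

theorem stmt_12_general [CompleteSpace E] {Q : Set E} (hQ : Convex ℝ Q) {f : E → ℝ}
    {f' g : E → E} {Lf μ δ R : ℝ} (hLf : 0 < Lf) (hμ : 0 < μ)
    (hgrad : ∀ v ∈ Q, HasGradientAt f (f' v) v)
    (hsmooth : ∀ v ∈ Q, ∀ w ∈ Q, ‖f' v - f' w‖ ≤ Lf * ‖v - w‖)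
    (hsc : ∀ v ∈ Q, ∀ w ∈ Q, f v + ⟪f' v, w - v⟫ + μ / 2 * ‖v - w‖ ^ 2 ≤ f w)
    (hg : ∀ v ∈ Q, ‖g v - f' v‖ ≤ δ) {α A : ℕ → ℝ} {xt x z : ℕ → E} {ψ : ℕ → E → ℝ}
    (h : IsSimilarTrianglesMethod Q f g (2 * Lf) (μ / 2) α A xt x z ψ)
    {u : E} (hu : u ∈ Q) (hR : ‖xt 0 - u‖ ≤ R) (N : ℕ) :
    f (x N) - f u ≤
      2 * Lf * R ^ 2 * Real.exp (-((N : ℝ) / 2) * √(μ / (2 * (2 * Lf)))) +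
      (1 + √(2 * (2 * Lf) / μ)) * (δ ^ 2 / (2 * Lf) + δ ^ 2 / μ) := by
  have hexact := isInexactOracleOn_gradient hQ hgrad hsmooth hsc
  rcases Q.subsingleton_or_nontrivial with hQ₁ | hQ₂
  · rw [hQ₁ (h.x_mem hQ (by positivity) N) hu, sub_self]
    positivity
  have hrate : √(μ / (2 * (2 * Lf))) ≤ 1 := by
    rw [Real.sqrt_le_one, div_le_one (by positivity)]
    linarith [hexact.curvature_le hQ₂]
  have hbound := h.sub_le hQ (by positivity) (by positivity)
    (hexact.of_norm_sub_le hLf hμ hg) hu N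
  rw [div_div, div_div_eq_mul_div, mul_comm (2 * Lf) 2, add_comm (δ ^ 2 / μ)] at hbound
  refine hbound.trans ?_
  gcongr
  · linarith
  · exact inv_one_add_pow_le_exp (Real.sqrt_nonneg _) hrate N

end SimilarTriangles

/-- Theorem 4.7, second bound (`τ = 2`, `μ_τ = μ/2`, `μ > 0`):
`f(x_N) − f(x*) ≤ L R² exp(−(N/2)√(μ/(2L))) + (1 + √(2L/μ))(δ₂ + δ₃)`,
with `L = 2 L_f`, `δ₂ = δ²/(2 L_f)`, `δ₃ = δ²/μ`. -/
theorem stmt_12 {n : ℕ} (Q : Set (EuclideanSpace ℝ (Fin n)))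
    (hQclosed : IsClosed Q) (hQconvex : Convex ℝ Q)
    (f : EuclideanSpace ℝ (Fin n) → ℝ)
    (f' gt : EuclideanSpace ℝ (Fin n) → EuclideanSpace ℝ (Fin n))
    (Lf μ δ R : ℝ) (hLf : 0 < Lf) (hμ : 0 < μ) (hδ : 0 ≤ δ)
    (hgrad : ∀ v ∈ Q, HasGradientAt f (f' v) v)
    (hsmooth : ∀ v ∈ Q, ∀ w ∈ Q, ‖f' v - f' w‖ ≤ Lf * ‖v - w‖)
    (hsc : ∀ v ∈ Q, ∀ w ∈ Q,
      f v + ⟪f' v, w - v⟫ + μ / 2 * ‖v - w‖ ^ 2 ≤ f w)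
    (horacle : ∀ v ∈ Q, ‖gt v - f' v‖ ≤ δ)
    (xstar : EuclideanSpace ℝ (Fin n)) (hxstarQ : xstar ∈ Q)
    (hxstar : ∀ y ∈ Q, f xstar ≤ f y)
    (α A : ℕ → ℝ) (xt x z : ℕ → EuclideanSpace ℝ (Fin n))
    (ψ : ℕ → EuclideanSpace ℝ (Fin n) → ℝ)
    (hxt0 : xt 0 ∈ Q) (hR : ‖xt 0 - xstar‖ ≤ R)
    (hα0 : α 0 = 1 / (2 * Lf)) (hA0 : A 0 = 1 / (2 * Lf))
    (hψ0 : ∀ y, ψ 0 y = 1 / 2 * ‖y - xt 0‖ ^ 2 +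
      α 0 * (f (xt 0) + ⟪gt (xt 0), y - xt 0⟫ + μ / 2 / 2 * ‖y - xt 0‖ ^ 2))
    (hzmem : ∀ k, z k ∈ Q) (hzmin : ∀ k, ∀ y ∈ Q, ψ k (z k) ≤ ψ k y)
    (hx0 : x 0 = z 0)
    (hαpos : ∀ k, 0 < α (k + 1))
    (hαeq : ∀ k, (1 + μ / 2 * A k) * (A k + α (k + 1)) = 2 * Lf * α (k + 1) ^ 2)
    (hA : ∀ k, A (k + 1) = A k + α (k + 1))
    (hxt : ∀ k, xt (k + 1) = (A (k + 1))⁻¹ • (A k • x k + α (k + 1) • z k))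
    (hψ : ∀ k y, ψ (k + 1) y = ψ k y + α (k + 1) *
      (f (xt (k + 1)) + ⟪gt (xt (k + 1)), y - xt (k + 1)⟫ +
        μ / 2 / 2 * ‖y - xt (k + 1)‖ ^ 2))
    (hx : ∀ k, x (k + 1) = (A (k + 1))⁻¹ • (A k • x k + α (k + 1) • z (k + 1))) :
    ∀ N : ℕ, f (x N) - f xstar ≤
      2 * Lf * R ^ 2 *
        Real.exp (-((N : ℝ) / 2) * Real.sqrt (μ / (2 * (2 * Lf)))) +
      (1 + Real.sqrt (2 * (2 * Lf) / μ)) * (δ ^ 2 / (2 * Lf) + δ ^ 2 / μ) :=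
  stmt_12_general hQconvex hLf hμ hgrad hsmooth hsc horacle
    ⟨hxt0, hα0, hA0, hψ0, hzmem, hzmin, hx0, hαpos, hαeq, hA, hxt, hψ, hx⟩ hxstarQ hR
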